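/- Assume (H1)–(H6) and the growth condition ρ(v) ≤ C(1+‖v‖_V^α)(1+‖i v‖_H^β). Let x∈H and let g:𝕏_T→[0,∞) be measurable with L_T(g)<∞. If X¹ (with V-valued representative u¹) and X² (with V-valued representative u²) are both solutions of the skeleton equation with initial value x and control g, then X¹_t = X²_t for every t∈[0,T]. -/

import Mathlib

open MeasureTheory Real Filter
open scoped ENNReal RealInnerProductSpace

/-- A solution of the skeleton equation with initial value `x` and control `g`:
a continuous `H`-valued path `X` on `[0,T]` together with a strongly measurable
`V`-valued representative `u` with `i ∘ u = X` a.e., `∫_0^T ‖u_t‖_V^α dt < ∞`, and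
`⟪X_t, i v⟫ = ⟪x, i v⟫ + ∫_0^t ⟨𝒜(s,u_s), v⟩ ds + ∫_0^t ∫_𝕏 ⟪f(s,u_s,z), i v⟫ (g(s,z)-1) ν(dz) ds`
for all `t ∈ [0,T]`, `v ∈ V`. -/
def IsSkeletonSolution {𝕏 H V : Type*} [MeasurableSpace 𝕏]
    [NormedAddCommGroup H] [InnerProductSpace ℝ H]
    [NormedAddCommGroup V] [NormedSpace ℝ V]
    (T α : ℝ) (ν : Measure 𝕏) (i : V →L[ℝ] H) (A : ℝ → V → (V →L[ℝ] ℝ))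
    (f : ℝ → V → 𝕏 → H) (x : H) (g : ℝ × 𝕏 → ℝ) (X : ℝ → H) (u : ℝ → V) : Prop :=
  ContinuousOn X (Set.Icc 0 T) ∧ StronglyMeasurable u ∧
  (∀ᵐ t ∂(volume.restrict (Set.Icc 0 T)), i (u t) = X t) ∧
  (∫⁻ t in Set.Icc 0 T, ENNReal.ofReal (‖u t‖ ^ α)) < ⊤ ∧
  ∀ t ∈ Set.Icc 0 T, ∀ v : V,
    ⟪X t, i v⟫ = ⟪x, i v⟫ + (∫ s in Set.Icc 0 t, A s (u s) v)
      + ∫ s in Set.Icc 0 t, ∫ z, ⟪f s (u s) z, i v⟫ * (g (s, z) - 1) ∂ν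

theorem sq_sqrt_sub_one_le_entropy {r : ℝ} (hr : 0 ≤ r) :
    (√r - 1) ^ 2 ≤ r * log r - r + 1 := by
  rcases hr.eq_or_lt with rfl | hr'
  · simp
  have hs : 0 < √r := Real.sqrt_pos.2 hr'
  have h := Real.one_sub_inv_le_log_of_pos hs
  have hlog : log r = 2 * log √r := by rw [Real.log_sqrt hr]; ring
  have hsq : √r * √r = r := Real.mul_self_sqrt hr
  have : r * (1 - (√r)⁻¹) ≤ r * log √r := mul_le_mul_of_nonneg_left h hr
  have h2 : r * (√r)⁻¹ = √r := by
    field_simp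
    nlinarith
  rw [hlog]
  nlinarith

theorem entropy_nonneg {r : ℝ} (hr : 0 ≤ r) : 0 ≤ r * log r - r + 1 :=
  (sq_nonneg _).trans (sq_sqrt_sub_one_le_entropy hr)

theorem mul_le_exp_add_entropy (a : ℝ) {b : ℝ} (hb : 0 ≤ b) :
    a * b ≤ exp a + (b * log b - b + 1) := by
  rcases hb.eq_or_lt with rfl | hb'
  · simp; positivity
  have h := Real.add_one_le_exp (a - log b)
  rw [Real.exp_sub, Real.exp_log hb', le_div_iff₀ hb'] at h
  nlinarith

/-- A square integrable function with exponential moments on sets of finite measure is integrable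
against `|g - 1|` when `g` has finite entropy. -/
theorem integrable_mul_abs_sub_one {Ω : Type*} [MeasurableSpace Ω] {μ : Measure Ω}
    {h g : Ω → ℝ} {p : ℝ} (hp : 1 ≤ p) (hm : Measurable h) (h0 : ∀ q, 0 ≤ h q)
    (hsq : ∫⁻ q, ENNReal.ofReal (h q ^ (2 : ℕ)) ∂μ < ⊤)
    (hexp : ∃ δ : ℝ, 0 < δ ∧ ∀ Γ : Set Ω, MeasurableSet Γ → μ Γ < ⊤ →
      ∫⁻ q in Γ, ENNReal.ofReal (Real.exp (δ * h q ^ p)) ∂μ < ⊤)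
    (gm : Measurable g) (g0 : ∀ q, 0 ≤ g q)
    (hg : (∫⁻ q, ENNReal.ofReal (g q * Real.log (g q) - g q + 1) ∂μ) < ⊤) :
    Integrable (fun q => h q * |g q - 1|) μ := by
  obtain ⟨δ, hδ, hexp⟩ := hexp
  have hlm : Measurable fun q => g q * Real.log (g q) - g q + 1 := by fun_prop
  have hΓ : MeasurableSet {q | 4 < g q} := measurableSet_lt measurable_const gm
  have hl1 : ∀ q, 4 < g q → 1 ≤ g q * Real.log (g q) - g q + 1 := by
    intro q hq
    have h1 : 2 ≤ √(g q) := Real.le_sqrt_of_sq_le (by linarith)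
    have := sq_sqrt_sub_one_le_entropy (g0 q)
    nlinarith
  have hfin : μ {q | 4 < g q} < ⊤ := by
    refine lt_of_le_of_lt ?_ hg
    rw [← lintegral_indicator_one hΓ]
    refine lintegral_mono fun q => ?_
    by_cases hq : 4 < g q
    · simpa [Set.indicator, hq] using hl1 q hq
    · simp [Set.indicator, hq]
  have hE := hexp _ hΓ hfin
  have i1 : Integrable (fun q => h q ^ 2) μ :=
    ⟨by fun_prop, by
      rw [hasFiniteIntegral_iff_ofReal (ae_of_all _ fun q => by positivity)]; exact hsq⟩
  have i2 : Integrable (fun q => g q * Real.log (g q) - g q + 1) μ :=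
    ⟨hlm.aestronglyMeasurable, by
      rw [hasFiniteIntegral_iff_ofReal (ae_of_all _ fun q => entropy_nonneg (g0 q))]; exact hg⟩
  have i3 : Integrable ({q | 4 < g q}.indicator fun q => exp (δ * h q ^ p)) μ := by
    rw [integrable_indicator_iff hΓ]
    have hem : Measurable fun q => exp (δ * h q ^ p) := by fun_prop
    exact ⟨hem.aestronglyMeasurable, by
      rw [hasFiniteIntegral_iff_ofReal (ae_of_all _ fun q => by positivity)]; exact hE⟩
  refine (((i1.add (i2.const_mul 9)).add (i2.const_mul δ⁻¹)).add
    (i3.const_mul (δ⁻¹ * exp δ))).mono' (by fun_prop) (ae_of_all _ fun q => ?_)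
  have hl0 := entropy_nonneg (g0 q)
  have hh := h0 q
  rw [Real.norm_of_nonneg (by positivity)]
  simp only [Pi.add_apply]
  by_cases hq : 4 < g q
  · rw [Set.indicator_of_mem (show q ∈ {q | 4 < g q} from hq)]
    have hy := mul_le_exp_add_entropy (δ * h q) (g0 q)
    have hle : h q ≤ 1 + h q ^ p := by
      rcases le_total (h q) 1 with h1 | h1
      · have := Real.rpow_nonneg hh p; linarith
      · have := Real.self_le_rpow_of_one_le h1 hp; linarith
    have hex : exp (δ * h q) ≤ exp δ * exp (δ * h q ^ p) := by
      rw [← Real.exp_add, Real.exp_le_exp]; nlinarith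
    have habs : |g q - 1| ≤ g q := by rw [abs_of_nonneg (by linarith)]; linarith
    have hkey : h q * g q ≤ δ⁻¹ * (exp δ * exp (δ * h q ^ p)
        + (g q * Real.log (g q) - g q + 1)) := by
      rw [inv_mul_eq_div, le_div_iff₀ hδ]; nlinarith
    have : h q * |g q - 1| ≤ h q * g q := mul_le_mul_of_nonneg_left habs hh
    have : 0 ≤ h q ^ 2 := by positivity
    linarith
  · rw [Set.indicator_of_notMem (show q ∉ {q | 4 < g q} from hq)]
    have hs := sq_sqrt_sub_one_le_entropy (g0 q)
    have hs2 : √(g q) ≤ 2 := by rw [Real.sqrt_le_left (by norm_num)]; linarith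
    have hs0 := Real.sqrt_nonneg (g q)
    have hsq := Real.mul_self_sqrt (g0 q)
    have hb : |g q - 1| ^ 2 ≤ 9 * (g q * Real.log (g q) - g q + 1) := by
      have e : |g q - 1| ^ 2 = (√(g q) - 1) ^ 2 * (√(g q) + 1) ^ 2 := by
        rw [sq_abs]; nth_rewrite 1 [← hsq]; ring
      rw [e]
      have : (√(g q) + 1) ^ 2 ≤ 9 := by nlinarith
      nlinarith [sq_nonneg (√(g q) - 1)]
    have : 0 ≤ δ⁻¹ * (g q * Real.log (g q) - g q + 1) := by positivity
    nlinarith [sq_nonneg (h q - |g q - 1|), sq_nonneg (h q), sq_nonneg (|g q - 1|)]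

/-- Gronwall's inequality with an integrable coefficient and zero initial value. -/
theorem eq_zero_of_le_integral_mul {T : ℝ} (hT : 0 ≤ T) {y κ : ℝ → ℝ} (hy : ContinuousOn y (Set.Icc 0 T))
    (hy0 : ∀ t ∈ Set.Icc 0 T, 0 ≤ y t) (hκ0 : ∀ t, 0 ≤ κ t)
    (hκ : IntegrableOn κ (Set.Icc 0 T))
    (hle : ∀ t ∈ Set.Icc 0 T, y t ≤ ∫ s in (0 : ℝ)..t, κ s * y s) :
    ∀ t ∈ Set.Icc 0 T, y t = 0 := by
  have hκy : IntegrableOn (fun s => κ s * y s) (Set.Icc 0 T) :=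
    hκ.mul_continuousOn hy isCompact_Icc
  have hc : ContinuousOn (fun t => ∫ s in (0 : ℝ)..t, κ s * y s) (Set.Icc 0 T) := by
    have := intervalIntegral.continuousOn_primitive_interval (a := 0) (b := T)
      (f := fun s => κ s * y s) (μ := volume) (by rwa [Set.uIcc_of_le hT])
    rwa [Set.uIcc_of_le hT] at this
  have hck : ContinuousOn (fun t => ∫ s in (0 : ℝ)..t, κ s) (Set.Icc 0 T) := by
    have := intervalIntegral.continuousOn_primitive_interval (a := 0) (b := T)
      (f := κ) (μ := volume) (by rwa [Set.uIcc_of_le hT])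
    rwa [Set.uIcc_of_le hT] at this
  have hI : ∀ {a b : ℝ}, 0 ≤ a → a ≤ b → b ≤ T →
      IntervalIntegrable (fun s => κ s * y s) volume a b := fun h1 h2 h3 => by
    rw [intervalIntegrable_iff_integrableOn_Icc_of_le h2]
    exact hκy.mono_set (Set.Icc_subset_Icc h1 h3)
  have hIk : ∀ {a b : ℝ}, 0 ≤ a → a ≤ b → b ≤ T →
      IntervalIntegrable κ volume a b := fun h1 h2 h3 => by
    rw [intervalIntegrable_iff_integrableOn_Icc_of_le h2]
    exact hκ.mono_set (Set.Icc_subset_Icc h1 h3)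
  have hsub : Set.Icc 0 T ⊆ {t | ∫ s in (0 : ℝ)..t, κ s * y s = 0} := by
    refine IsClosed.Icc_subset_of_forall_exists_gt ?_ (by simp) ?_
    · rw [Set.inter_comm]
      exact hc.preimage_isClosed_of_isClosed isClosed_Icc isClosed_singleton
    · rintro r ⟨hr0, hrm⟩ b hb
      have hr0' : ∫ s in (0 : ℝ)..r, κ s * y s = 0 := hr0
      have hev : ∀ᶠ t in nhdsWithin r (Set.Ioi r),
          (∫ s in (0 : ℝ)..t, κ s) < (∫ s in (0 : ℝ)..r, κ s) + 1 / 2 := by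
        have h1 : ContinuousWithinAt (fun t => ∫ s in (0 : ℝ)..t, κ s) (Set.Ioi r) r := by
          have h2 := (hck r ⟨hrm.1, hrm.2.le⟩).mono
            (s := Set.Ioo r T) fun z hz => ⟨hrm.1.trans hz.1.le, hz.2.le⟩
          exact h2.mono_of_mem_nhdsWithin (Ioo_mem_nhdsGT hrm.2)
        exact h1.eventually_lt_const (by linarith)
      obtain ⟨t, ht, htm⟩ := (hev.and
        (Ioc_mem_nhdsGT (lt_min (Set.mem_Ioi.1 hb) hrm.2))).exists
      have htT : t ≤ T := htm.2.trans (min_le_right _ _)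
      have hrt := htm.1.le
      refine ⟨t, ?_, htm.1, htm.2.trans (min_le_left _ _)⟩
      have ek : (∫ s in r..t, κ s) ≤ 1 / 2 := by
        have := intervalIntegral.integral_add_adjacent_intervals
          (hIk le_rfl hrm.1 hrm.2.le) (hIk hrm.1 hrt htT)
        linarith
      have ey := intervalIntegral.integral_add_adjacent_intervals
          (hI le_rfl hrm.1 hrm.2.le) (hI hrm.1 hrt htT)
      have hmono : ∀ z ∈ Set.Icc r t, y z ≤ ∫ s in (0 : ℝ)..t, κ s * y s := fun z hz => by
        have hz0 := hrm.1.trans hz.1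
        refine (hle z ⟨hz0, hz.2.trans htT⟩).trans ?_
        rw [← intervalIntegral.integral_add_adjacent_intervals (hI le_rfl hz0 (hz.2.trans htT))
          (hI hz0 hz.2 htT)]
        have : 0 ≤ ∫ s in z..t, κ s * y s :=
          intervalIntegral.integral_nonneg hz.2 fun s hs =>
            mul_nonneg (hκ0 s) (hy0 s ⟨hz0.trans hs.1, hs.2.trans htT⟩)
        linarith
      have hΨ0 : 0 ≤ ∫ s in (0 : ℝ)..t, κ s * y s :=
        intervalIntegral.integral_nonneg (hrm.1.trans hrt) fun s hs =>
            mul_nonneg (hκ0 s) (hy0 s ⟨hs.1, hs.2.trans htT⟩)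
      have hbd : ∫ s in r..t, κ s * y s
          ≤ ∫ s in r..t, κ s * ∫ s in (0 : ℝ)..t, κ s * y s :=
        intervalIntegral.integral_mono_on hrt (hI hrm.1 hrt htT)
          ((hIk hrm.1 hrt htT).mul_const _) fun s hs =>
            mul_le_mul_of_nonneg_left (hmono s hs) (hκ0 s)
      rw [intervalIntegral.integral_mul_const] at hbd
      have : ∫ s in (0 : ℝ)..t, κ s * y s = 0 := by nlinarith
      exact this
  intro t ht
  exact le_antisymm ((hle t ht).trans_eq (hsub ht)) (hy0 t ht)

theorem tendsto_eLpNorm_sub_translate {E : Type*} [NormedAddCommGroup E] {p : ℝ≥0∞} (hp1 : 1 ≤ p)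
    (hp : p ≠ ∞) {w : ℝ → E} (hw : MemLp w p volume) :
    Tendsto (fun d : ℝ => eLpNorm (fun s => w s - w (s - d)) p volume) (nhds 0) (nhds 0) := by
  have : Fact (1 ≤ p) := ⟨hp1⟩
  have : Fact (p ≠ ∞) := ⟨hp⟩
  have hmk : Continuous fun d : ℝ => DomAddAct.mk (-d) :=
    DomAddAct.continuous_mk.comp continuous_neg
  have hc : Continuous fun d : ℝ => (DomAddAct.mk (-d)) +ᵥ hw.toLp w :=
    Continuous.vadd hmk continuous_const
  have h0 := hc.tendsto 0
  rw [tendsto_iff_edist_tendsto_0] at h0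
  refine h0.congr fun d => ?_
  rw [DomAddAct.mk_vadd_toLp, neg_zero, DomAddAct.mk_vadd_toLp, Lp.edist_toLp_toLp]
  rw [← eLpNorm_neg]
  refine eLpNorm_congr_ae (ae_of_all _ fun s => ?_)
  simp [neg_add_eq_sub]

/-- The error made by replacing `w (s - d)` with `w s` in a functional with coefficients `a`, `m`
vanishes as `d → 0`. -/
theorem exists_translate_error_le {H V : Type*} [NormedAddCommGroup H] [NormedSpace ℝ H]
    [NormedAddCommGroup V] [NormedSpace ℝ V] (i : V →L[ℝ] H) {p q : ℝ≥0∞} [q.HolderTriple p 1]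
    (hp1 : 1 ≤ p) (hp : p ≠ ∞) {w : ℝ → V} (hw : MemLp w p volume) {a m : ℝ → ℝ}
    (ha : MemLp a q volume) (ha0 : ∀ s, 0 ≤ a s) (hm : Integrable m) (hm0 : ∀ s, 0 ≤ m s)
    {Y : ℝ → H} (hY : UniformContinuous Y) {T : ℝ}
    (hYw : ∀ᵐ s, s ≤ T → i (w s) = Y s) {ε : ℝ} (hε : 0 < ε) :
    ∃ h₀ > 0, ∀ d, 0 ≤ d → d < h₀ →
      ∫⁻ s in Set.Iic T, ENNReal.ofReal (a (s - d) * ‖w s - w (s - d)‖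
        + m (s - d) * ‖i (w s) - i (w (s - d))‖) ≤ ENNReal.ofReal ε := by
  have hM0 : 0 ≤ ∫ s, m s := integral_nonneg hm0
  have h1 : Tendsto (fun d : ℝ => eLpNorm a q volume *
      eLpNorm (fun s => w s - w (s - d)) p volume) (nhds 0) (nhds 0) := by
    simpa using ENNReal.Tendsto.const_mul (tendsto_eLpNorm_sub_translate hp1 hp hw)
      (Or.inr ha.2.ne)
  have hε2 : 0 < ENNReal.ofReal (ε / 2) := by simpa using hε
  obtain ⟨δ₁, hδ₁, H₁⟩ := Metric.eventually_nhds_iff.1 (h1.eventually_lt_const hε2)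
  obtain ⟨δ₂, hδ₂, H₂⟩ := Metric.uniformContinuous_iff.1 hY (ε / 2 / ((∫ s, m s) + 1))
    (by positivity)
  refine ⟨min δ₁ δ₂, lt_min hδ₁ hδ₂, fun d hd0 hd => ?_⟩
  have hmp := measurePreserving_sub_right (volume : Measure ℝ) d
  have had : MemLp (fun s => a (s - d)) q volume := ha.comp_measurePreserving hmp
  have hwd : MemLp (fun s => w (s - d)) p volume := hw.comp_measurePreserving hmp
  have hE₁ : ∫⁻ s in Set.Iic T, ENNReal.ofReal (a (s - d) * ‖w s - w (s - d)‖)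
      ≤ ENNReal.ofReal (ε / 2) := by
    refine (setLIntegral_le_lintegral _ _).trans ?_
    have hh := eLpNorm_smul_le_mul_eLpNorm (p := q) (q := p) (r := 1) (hw.1.sub hwd.1).norm had.1
    rw [eLpNorm_one_eq_lintegral_enorm] at hh
    have e1 : eLpNorm (fun s => a (s - d)) q volume = eLpNorm a q volume :=
      eLpNorm_comp_measurePreserving ha.1 hmp
    rw [e1] at hh
    have hh2 := hh.trans (le_of_eq (congrArg _ (eLpNorm_norm _)))
    refine (le_of_eq ?_).trans (hh2.trans (H₁ (y := d) ?_).le)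
    · refine lintegral_congr fun s => ?_
      rw [← ofReal_norm]
      simp [abs_of_nonneg (ha0 _)]
    · rw [dist_zero_right, Real.norm_of_nonneg hd0]; exact hd.trans_le (min_le_left _ _)
  have hE₂ : ∫⁻ s in Set.Iic T, ENNReal.ofReal (m (s - d) * ‖i (w s) - i (w (s - d))‖)
      ≤ ENNReal.ofReal (ε / 2) := by
    have hae := hmp.quasiMeasurePreserving.ae hYw
    calc _ ≤ ∫⁻ s in Set.Iic T, ENNReal.ofReal (m (s - d) * (ε / 2 / ((∫ s, m s) + 1))) := by
          refine lintegral_mono_ae ?_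
          filter_upwards [ae_restrict_of_ae hYw, ae_restrict_of_ae hae,
            ae_restrict_mem measurableSet_Iic] with s hs hs' hsT
          have hsT : s ≤ T := hsT
          rw [hs hsT, hs' (by linarith), ← dist_eq_norm]
          refine ENNReal.ofReal_le_ofReal (mul_le_mul_of_nonneg_left (H₂ ?_).le (hm0 _))
          rw [Real.dist_eq, sub_sub_cancel, abs_of_nonneg hd0]
          exact hd.trans_le (min_le_right _ _)
      _ ≤ ∫⁻ s, ENNReal.ofReal (m (s - d) * (ε / 2 / ((∫ s, m s) + 1))) :=
          setLIntegral_le_lintegral _ _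
      _ = ENNReal.ofReal (∫ s, m (s - d) * (ε / 2 / ((∫ s, m s) + 1))) := by
          rw [ofReal_integral_eq_lintegral_ofReal ((hm.comp_sub_right d).mul_const _)]
          exact ae_of_all _ fun s => mul_nonneg (hm0 _) (by positivity)
      _ ≤ ENNReal.ofReal (ε / 2) := by
          refine ENNReal.ofReal_le_ofReal ?_
          rw [integral_mul_const, integral_sub_right_eq_self m d, mul_div_assoc',
            div_le_iff₀ (by positivity)]
          nlinarith
  calc _ = ∫⁻ s in Set.Iic T, (ENNReal.ofReal (a (s - d) * ‖w s - w (s - d)‖)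
        + ENNReal.ofReal (m (s - d) * ‖i (w s) - i (w (s - d))‖)) := by
        refine lintegral_congr fun s => ENNReal.ofReal_add ?_ ?_
        · exact mul_nonneg (ha0 _) (norm_nonneg _)
        · exact mul_nonneg (hm0 _) (norm_nonneg _)
    _ = _ := by
        refine lintegral_add_left' ?_ _
        exact (had.1.aemeasurable.mul
          (hw.1.sub hwd.1).norm.aemeasurable).ennreal_ofReal.restrict
    _ ≤ ENNReal.ofReal (ε / 2) + ENNReal.ofReal (ε / 2) := add_le_add hE₁ hE₂
    _ = ENNReal.ofReal ε := by
        rw [← ENNReal.ofReal_add (by positivity) (by positivity), add_halves]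

/-- Energy inequality for a path `Y = i ∘ w` whose weak derivative is `Λ`. -/
theorem norm_sq_le_two_mul_integral {H V : Type*} [NormedAddCommGroup H] [InnerProductSpace ℝ H]
    [NormedAddCommGroup V] [NormedSpace ℝ V] (i : V →L[ℝ] H) {p q : ℝ≥0∞} [q.HolderTriple p 1]
    (hp1 : 1 ≤ p) (hp : p ≠ ∞) {w : ℝ → V} (hw : MemLp w p volume) {a m : ℝ → ℝ}
    (ha : MemLp a q volume) (ha0 : ∀ s, 0 ≤ a s) (hm : Integrable m) (hm0 : ∀ s, 0 ≤ m s)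
    {Y : ℝ → H} (hY : UniformContinuous Y) (hY0 : ∀ s ≤ 0, Y s = 0) {T : ℝ}
    (hYw : ∀ᵐ s, s ≤ T → i (w s) = Y s) {Λ : ℝ → V → ℝ}
    (hΛv : ∀ v, Integrable fun s => Λ s v) (hΛw : Integrable fun s => Λ s (w s))
    (hΛneg : ∀ s < 0, ∀ v, Λ s v = 0)
    (hΛ : ∀ᵐ s, ∀ v v', |Λ s v - Λ s v'| ≤ a s * ‖v - v'‖ + m s * ‖i v - i v'‖)
    (hweak : ∀ s t, s ≤ t → t ≤ T → ∀ v, ⟪Y t - Y s, i v⟫ = ∫ r in s..t, Λ r v)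
    {t : ℝ} (ht0 : 0 < t) (htT : t ≤ T) :
    ‖Y t‖ ^ 2 ≤ 2 * ∫ s in (0 : ℝ)..t, Λ s (w s) := by
  have hnc : Continuous fun s => ‖Y s‖ ^ 2 := by have := hY.continuous; fun_prop
  have hΦc : Continuous fun τ => ∫ s in (0 : ℝ)..τ, Λ s (w s) :=
    intervalIntegral.continuous_primitive (fun _ _ => hΛw.intervalIntegrable) 0
  refine le_of_forall_pos_le_add fun η hη => ?_
  obtain ⟨ε, hε, hεη⟩ : ∃ ε > 0, 5 * ε = η := ⟨η / 5, by positivity, by ring⟩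
  obtain ⟨h₀, hh₀, Herr⟩ := exists_translate_error_le i hp1 hp hw ha ha0 hm hm0 hY hYw hε
  obtain ⟨δ₁, hδ₁, H₁⟩ := Metric.continuous_iff.1 hnc t ε hε
  obtain ⟨δ₂, hδ₂, H₂⟩ := Metric.continuous_iff.1 hΦc t ε hε
  obtain ⟨h, hh, hhlt⟩ := exists_between (lt_min (lt_min hh₀ hδ₁) hδ₂)
  have hlt₀ : h < h₀ := hhlt.trans_le ((min_le_left _ _).trans (min_le_left _ _))
  have hlt₁ : h < δ₁ := hhlt.trans_le ((min_le_left _ _).trans (min_le_right _ _))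
  have hlt₂ : h < δ₂ := hhlt.trans_le (min_le_right _ _)
  set Q : ℝ → ℝ := fun s => Λ s (w s) with hQ
  set E : ℝ → ℝ → ℝ := fun s d => a (s - d) * ‖w s - w (s - d)‖
        + m (s - d) * ‖i (w s) - i (w (s - d))‖ with hE
  have hE0 : ∀ s d, 0 ≤ E s d := fun s d =>
    add_nonneg (mul_nonneg (ha0 _) (norm_nonneg _)) (mul_nonneg (hm0 _) (norm_nonneg _))
  -- integrability on the product
  have hqmp := quasiMeasurePreserving_sub (volume : Measure ℝ) (volume : Measure ℝ)
  have hac : ((volume.restrict (Set.uIoc 0 t)).prod (volume.restrict (Set.uIoc 0 h)))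
      ≪ (volume : Measure (ℝ × ℝ)) :=
    Measure.AbsolutelyContinuous.prod Measure.absolutelyContinuous_restrict
      Measure.absolutelyContinuous_restrict
  have hEm : AEStronglyMeasurable (Function.uncurry E)
      ((volume.restrict (Set.uIoc 0 t)).prod (volume.restrict (Set.uIoc 0 h))) := by
    refine AEStronglyMeasurable.mono_ac hac ?_
    have m1 := ha.1.comp_quasiMeasurePreserving hqmp
    have m2 := hm.1.comp_quasiMeasurePreserving hqmp
    have m3 := hw.1.comp_quasiMeasurePreserving hqmp
    have m4 : AEStronglyMeasurable (fun z : ℝ × ℝ => w z.1) (volume.prod volume) :=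
      hw.1.comp_fst
    have m5 := (i.continuous.comp_aestronglyMeasurable m4).sub
      (i.continuous.comp_aestronglyMeasurable m3)
    exact (m1.mul (m4.sub m3).norm).add (m2.mul m5.norm)
  have hfinh : IsFiniteMeasure ((volume : Measure ℝ).restrict (Set.uIoc 0 h)) := by
    rw [Set.uIoc_of_le hh.le]; infer_instance
  have hEd : ∀ d ∈ Set.Ioc 0 h, ∫⁻ s in Set.uIoc 0 t, ENNReal.ofReal (E s d) ≤ ENNReal.ofReal ε := by
    intro d hd
    refine le_trans (lintegral_mono_set ?_) (Herr d hd.1.le (hd.2.trans_lt hlt₀))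
    rw [Set.uIoc_of_le ht0.le]
    exact fun s hs => hs.2.trans htT
  have hEint : Integrable (Function.uncurry E)
      ((volume.restrict (Set.uIoc 0 t)).prod (volume.restrict (Set.uIoc 0 h))) := by
    refine ⟨hEm, ?_⟩
    rw [hasFiniteIntegral_iff_ofReal (f := Function.uncurry E) (ae_of_all _ fun z : ℝ × ℝ => hE0 z.1 z.2),
      lintegral_prod_symm _ hEm.aemeasurable.ennreal_ofReal]
    calc _ ≤ ∫⁻ d in Set.uIoc 0 h, ENNReal.ofReal ε := by
          refine setLIntegral_mono' measurableSet_uIoc fun d hd => hEd d ?_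
          rwa [Set.uIoc_of_le hh.le] at hd
      _ < ⊤ := by
          rw [lintegral_const]
          exact ENNReal.mul_lt_top ENNReal.ofReal_lt_top (measure_lt_top _ _)
  have hQint : Integrable (Function.uncurry fun s d => Q (s - d))
      ((volume.restrict (Set.uIoc 0 t)).prod (volume.restrict (Set.uIoc 0 h))) := by
    have hc1 : Integrable (fun _ : ℝ => (1 : ℝ)) (volume.restrict (Set.uIoc 0 h)) :=
      integrable_const _
    have := Integrable.convolution_integrand (ContinuousLinearMap.mul ℝ ℝ) hc1 hΛw
    refine (this.mono_measure (μ := (volume.restrict (Set.uIoc 0 t)).prod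
      (volume.restrict (Set.uIoc 0 h))) ?_).congr (ae_of_all _ fun z => ?_)
    · exact Measure.prod_mono Measure.restrict_le_self le_rfl
    · simp [hQ, Function.uncurry]
  have hsum := hQint.add hEint
  -- pointwise bound on increments
  have hpt : ∀ᵐ s ∂(volume.restrict (Set.uIoc 0 t)), ‖Y s‖ ^ 2 - ‖Y (s - h)‖ ^ 2
      ≤ 2 * ∫ d in (0 : ℝ)..h, (Q (s - d) + E s d) := by
    filter_upwards [hsum.prod_right_ae, ae_restrict_of_ae hYw,
      ae_restrict_mem measurableSet_uIoc] with s hsi hsY hst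
    rw [Set.uIoc_of_le ht0.le] at hst
    have hsT := hst.2.trans htT
    have e1 : ‖Y s‖ ^ 2 - ‖Y (s - h)‖ ^ 2 ≤ 2 * ⟪Y s - Y (s - h), Y s⟫ := by
      have h1 := norm_sub_sq_real (Y s) (Y (s - h))
      have h2 : ⟪Y s - Y (s - h), Y s⟫ = ‖Y s‖ ^ 2 - ⟪Y s, Y (s - h)⟫ := by
        rw [inner_sub_left, real_inner_self_eq_norm_sq, real_inner_comm]
      nlinarith [sq_nonneg ‖Y s - Y (s - h)‖]
    have e2 : ⟪Y s - Y (s - h), Y s⟫ = ∫ d in (0 : ℝ)..h, Λ (s - d) (w s) := by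
      have e3 := hweak (s - h) s (by linarith) hsT (w s)
      rw [hsY hsT] at e3
      rw [e3, intervalIntegral.integral_comp_sub_left (fun r => Λ r (w s)) s, sub_zero]
    refine e1.trans (mul_le_mul_of_nonneg_left ?_ zero_le_two)
    rw [e2]
    refine intervalIntegral.integral_mono_ae hh.le ?_ ?_ ?_
    · exact ((hΛv (w s)).comp_sub_left s).intervalIntegrable
    · rw [intervalIntegrable_iff]; exact hsi
    · have := (quasiMeasurePreserving_sub_left (volume : Measure ℝ) s).ae hΛ
      filter_upwards [this] with d hd
      have := (abs_le.1 (hd (w s) (w (s - d)))).2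
      simp only [hQ, hE]
      linarith
  -- integrate in `s`
  have hci : ∀ b c : ℝ, IntervalIntegrable (fun s => ‖Y s‖ ^ 2) volume b c :=
    fun b c => hnc.intervalIntegrable b c
  have hlow : h * (‖Y t‖ ^ 2 - ε) ≤ ∫ s in (0 : ℝ)..t, (‖Y s‖ ^ 2 - ‖Y (s - h)‖ ^ 2) := by
    rw [intervalIntegral.integral_sub (hci _ _)
        (g := fun s => ‖Y (s - h)‖ ^ 2)
        ((hnc.comp (continuous_sub_right h)).intervalIntegrable 0 t),
      intervalIntegral.integral_comp_sub_right (fun s => ‖Y s‖ ^ 2) h]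
    have z0 : ∫ s in (0 - h)..0, ‖Y s‖ ^ 2 = 0 := by
      rw [intervalIntegral.integral_congr (g := fun _ => (0 : ℝ))]
      · simp
      · intro s hs
        rw [Set.uIcc_of_le (by linarith)] at hs
        simp [hY0 s hs.2]
    have z1 := intervalIntegral.integral_add_adjacent_intervals (hci (0 - h) 0) (hci 0 (t - h))
    have z2 := intervalIntegral.integral_add_adjacent_intervals (hci 0 (t - h)) (hci (t - h) t)
    have z3 : ∫ s in (t - h)..t, (‖Y t‖ ^ 2 - ε) ≤ ∫ s in (t - h)..t, ‖Y s‖ ^ 2 := by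
      refine intervalIntegral.integral_mono_on (by linarith) (by simp) (hci _ _) fun s hs => ?_
      have := H₁ s (by rw [Real.dist_eq, abs_lt]; constructor <;> linarith [hs.1, hs.2])
      rw [Real.dist_eq, abs_lt] at this
      linarith [this.1]
    rw [intervalIntegral.integral_const, smul_eq_mul, sub_sub_cancel] at z3
    linarith
  have hup : ∫ s in (0 : ℝ)..t, (‖Y s‖ ^ 2 - ‖Y (s - h)‖ ^ 2)
      ≤ 2 * (h * ((∫ s in (0 : ℝ)..t, Q s) + 2 * ε)) := by
    have b1 : ∫ s in (0 : ℝ)..t, (‖Y s‖ ^ 2 - ‖Y (s - h)‖ ^ 2)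
        ≤ ∫ s in (0 : ℝ)..t, 2 * ∫ d in (0 : ℝ)..h, (Q (s - d) + E s d) := by
      refine intervalIntegral.integral_mono_ae_restrict ht0.le
        ((hnc.sub (hnc.comp (continuous_sub_right h))).intervalIntegrable 0 t) ?_ ?_
      · rw [intervalIntegrable_iff]
        simp_rw [intervalIntegral.integral_of_le hh.le, ← Set.uIoc_of_le hh.le]
        exact (hsum.integral_prod_left).const_mul 2
      · rw [Set.uIoc_of_le ht0.le] at hpt
        rw [← restrict_Ioc_eq_restrict_Icc]
        exact hpt
    refine b1.trans ?_
    rw [intervalIntegral.integral_const_mul]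
    refine mul_le_mul_of_nonneg_left ?_ zero_le_two
    rw [intervalIntegral_intervalIntegral_swap (F := fun s d => Q (s - d) + E s d)
      (by rw [IntegrableOn, Measure.volume_eq_prod, ← Measure.prod_restrict]; exact hsum)]
    have hright : IntervalIntegrable (fun d => ∫ s in (0 : ℝ)..t, (Q (s - d) + E s d))
        volume 0 h := by
      rw [intervalIntegrable_iff]
      simp_rw [intervalIntegral.integral_of_le ht0.le, ← Set.uIoc_of_le ht0.le]
      exact hsum.integral_prod_right
    have b2 : ∫ d in (0 : ℝ)..h, ∫ s in (0 : ℝ)..t, (Q (s - d) + E s d)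
        ≤ ∫ d in (0 : ℝ)..h, ((∫ s in (0 : ℝ)..t, Q s) + 2 * ε) := by
      refine intervalIntegral.integral_mono_ae_restrict hh.le hright (by simp) ?_
      rw [← restrict_Ioc_eq_restrict_Icc]
      have hEa := hEint.prod_left_ae
      rw [Set.uIoc_of_le hh.le] at hEa
      filter_upwards [hEa, ae_restrict_mem measurableSet_Ioc] with d hdE hd
      have hQd : IntervalIntegrable (fun s => Q (s - d)) volume 0 t :=
        (hΛw.comp_sub_right d).intervalIntegrable
      have hEd' : IntervalIntegrable (fun s => E s d) volume 0 t := by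
        rw [intervalIntegrable_iff]; exact hdE
      rw [intervalIntegral.integral_add hQd hEd',
        intervalIntegral.integral_comp_sub_right Q d]
      have c1 : ∫ s in (0 : ℝ)..t, E s d ≤ ε := by
        rw [intervalIntegral.integral_of_le ht0.le, ← Set.uIoc_of_le ht0.le,
          integral_eq_lintegral_of_nonneg_ae (ae_of_all _ fun s => hE0 s d) hdE.1]
        exact ENNReal.toReal_le_of_le_ofReal hε.le (hEd d hd)
      have c2 : ∫ s in (0 - d)..0, Q s = 0 := by
        rw [intervalIntegral.integral_of_le (by linarith [hd.1]), integral_Ioc_eq_integral_Ioo]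
        rw [setIntegral_congr_fun (g := fun _ => (0 : ℝ)) measurableSet_Ioo]
        · simp
        · intro s hs
          exact hΛneg s hs.2 _
      have c3 := intervalIntegral.integral_add_adjacent_intervals
        (hΛw.intervalIntegrable (a := 0 - d) (b := 0))
        (hΛw.intervalIntegrable (a := 0) (b := t - d))
      have c4 := H₂ (t - d) (by
        rw [Real.dist_eq, sub_sub_cancel_left, abs_neg, abs_of_nonneg hd.1.le]
        exact hd.2.trans_lt hlt₂)
      rw [Real.dist_eq, abs_lt] at c4
      simp only [hQ] at c1 c2 c3 c4 ⊢
      linarith [c4.2]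
    refine b2.trans_eq ?_
    rw [intervalIntegral.integral_const, sub_zero, smul_eq_mul]
  have hfin := hlow.trans hup
  have : ‖Y t‖ ^ 2 - ε ≤ 2 * ((∫ s in (0 : ℝ)..t, Q s) + 2 * ε) := by
    refine le_of_mul_le_mul_left (a := h) ?_ hh
    linarith
  linarith

/-- Pairings of a dominated `H`-valued field with a fixed vector are integrable against `g - 1`. -/
theorem ae_integrable_inner_mul_sub_one {S 𝕏 H : Type*} [MeasurableSpace S] [MeasurableSpace 𝕏]
    [NormedAddCommGroup H] [InnerProductSpace ℝ H] [SecondCountableTopology H]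
    [MeasurableSpace H] [BorelSpace H] {μ : Measure S} [SFinite μ] {ν : Measure 𝕏} [SFinite ν]
    {D : S × 𝕏 → H} (hD : Measurable D) {g ℓ : S × 𝕏 → ℝ} (hg : Measurable g)
    (hℓ : Integrable (fun q => ℓ q * |g q - 1|) (μ.prod ν)) {c : S → ℝ}
    (hbd : ∀ᵐ s ∂μ, ∀ z, ‖D (s, z)‖ ≤ ℓ (s, z) * c s) :
    ∀ᵐ s ∂μ, ∀ h : H, Integrable (fun z => ⟪D (s, z), h⟫ * (g (s, z) - 1)) ν ∧
      |∫ z, ⟪D (s, z), h⟫ * (g (s, z) - 1) ∂ν|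
        ≤ (∫ z, ℓ (s, z) * |g (s, z) - 1| ∂ν) * c s * ‖h‖ := by
  filter_upwards [hℓ.prod_right_ae, hbd] with s hs hb h
  have hi : Integrable (fun z => ℓ (s, z) * |g (s, z) - 1| * c s * ‖h‖) ν :=
    (hs.mul_const _).mul_const _
  have hle : ∀ z, ‖⟪D (s, z), h⟫ * (g (s, z) - 1)‖ ≤ ℓ (s, z) * |g (s, z) - 1| * c s * ‖h‖ := by
    intro z
    rw [norm_mul, Real.norm_eq_abs (g (s, z) - 1)]
    calc _ ≤ (‖D (s, z)‖ * ‖h‖) * |g (s, z) - 1| := by gcongr; exact norm_inner_le_norm _ _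
      _ ≤ (ℓ (s, z) * c s * ‖h‖) * |g (s, z) - 1| := by gcongr; exact hb z
      _ = _ := by ring
  have hmeas : Measurable fun z => ⟪D (s, z), h⟫ * (g (s, z) - 1) := by fun_prop
  refine ⟨hi.mono' hmeas.aestronglyMeasurable (ae_of_all _ hle), ?_⟩
  calc _ ≤ ∫ z, ℓ (s, z) * |g (s, z) - 1| * c s * ‖h‖ ∂ν :=
        norm_integral_le_of_norm_le hi (ae_of_all _ hle)
    _ = _ := by rw [integral_mul_const, integral_mul_const]

theorem integrable_integral_inner_mul_sub_one {S 𝕏 H : Type*} [MeasurableSpace S]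
    [MeasurableSpace 𝕏] [NormedAddCommGroup H] [InnerProductSpace ℝ H]
    [SecondCountableTopology H] [MeasurableSpace H] [BorelSpace H] {μ : Measure S} [SFinite μ]
    {ν : Measure 𝕏} [SFinite ν] {D : S × 𝕏 → H} (hD : Measurable D) {g ℓ : S × 𝕏 → ℝ}
    (hg : Measurable g) (hℓ : Integrable (fun q => ℓ q * |g q - 1|) (μ.prod ν)) {c : ℝ}
    (hbd : ∀ᵐ s ∂μ, ∀ z, ‖D (s, z)‖ ≤ ℓ (s, z) * c) (h : H) :
    Integrable (fun s => ∫ z, ⟪D (s, z), h⟫ * (g (s, z) - 1) ∂ν) μ := by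
  have hm : StronglyMeasurable fun q => ⟪D q, h⟫ * (g q - 1) :=
    Measurable.stronglyMeasurable (by fun_prop)
  refine ((hℓ.integral_prod_left.mul_const c).mul_const ‖h‖).mono'
    hm.integral_prod_right'.aestronglyMeasurable ?_
  filter_upwards [ae_integrable_inner_mul_sub_one hD hg hℓ (c := fun _ => c) hbd] with s hs
  exact (hs h).2

/-- The growth condition on an operator makes its norm along an `L^α` path dominated by a function
of the conjugate Lebesgue space. -/
theorem exists_memLp_bound {Ω : Type*} [MeasurableSpace Ω] {μ : Measure Ω}
    {α C M β : ℝ} (hα : 1 < α) (hC : 0 ≤ C) (hM : 0 ≤ M) (hβ : 0 ≤ β) {F U N B : Ω → ℝ}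
    (hF : Integrable F μ) (hF0 : ∀ s, 0 ≤ F s) (hU : Integrable U μ) (hU0 : ∀ s, 0 ≤ U s)
    (hN0 : ∀ s, 0 ≤ N s) (hB0 : ∀ s, 0 ≤ B s) (hB : ∀ᵐ s ∂μ, B s ≤ M)
    (hN : ∀ᵐ s ∂μ, N s ^ (α / (α - 1)) ≤ (F s + C * U s) * (1 + B s ^ β)) :
    ∃ a : Ω → ℝ, MemLp a (ENNReal.ofReal (α / (α - 1))) μ ∧ (∀ s, 0 ≤ a s) ∧
      ∀ᵐ s ∂μ, N s ≤ a s := by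
  have hα1 : 0 < α - 1 := by linarith
  have hq : 0 < α / (α - 1) := by positivity
  have hG0 : ∀ s, 0 ≤ (F s + C * U s) * (1 + M ^ β) := fun s =>
    mul_nonneg (add_nonneg (hF0 s) (mul_nonneg hC (hU0 s))) (by positivity)
  have hG : Integrable (fun s => (F s + C * U s) * (1 + M ^ β)) μ :=
    (hF.add (hU.const_mul C)).mul_const _
  refine ⟨fun s => ((F s + C * U s) * (1 + M ^ β)) ^ (α / (α - 1))⁻¹, ?_,
    fun s => Real.rpow_nonneg (hG0 s) _, ?_⟩
  · rw [← integrable_norm_rpow_iff]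
    · refine hG.congr (ae_of_all _ fun s => ?_)
      beta_reduce
      rw [ENNReal.toReal_ofReal hq.le, Real.norm_of_nonneg (Real.rpow_nonneg (hG0 s) _),
        Real.rpow_inv_rpow (hG0 s) hq.ne']
    · exact (hG.1.aemeasurable.pow_const _).aestronglyMeasurable
    · simpa using hq
    · exact ENNReal.ofReal_ne_top
  · filter_upwards [hN, hB] with s hs hb
    rw [Real.le_rpow_inv_iff_of_pos (hN0 s) (hG0 s) hq]
    refine hs.trans (mul_le_mul_of_nonneg_left ?_ (add_nonneg (hF0 s) (mul_nonneg hC (hU0 s))))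
    gcongr
    exact hB0 s

theorem stmt_10
    {𝕏 : Type*} [TopologicalSpace 𝕏] [PolishSpace 𝕏] [LocallyCompactSpace 𝕏]
    [MeasurableSpace 𝕏] [BorelSpace 𝕏]
    {H : Type*} [NormedAddCommGroup H] [InnerProductSpace ℝ H]
    [TopologicalSpace.SeparableSpace H] [MeasurableSpace H] [BorelSpace H]
    {V : Type*} [NormedAddCommGroup V] [NormedSpace ℝ V]
    [TopologicalSpace.SeparableSpace V] [MeasurableSpace V] [BorelSpace V]
    (hVrefl : Function.Surjective (NormedSpace.inclusionInDoubleDual ℝ V))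
    (T : ℝ) (hT : 0 < T)
    (ν : Measure 𝕏) [SigmaFinite ν] (hνK : ∀ Kc : Set 𝕏, IsCompact Kc → ν Kc < ⊤)
    (νT : Measure (ℝ × 𝕏)) (hνT : νT = (volume.restrict (Set.Icc 0 T)).prod ν)
    (α β θ C : ℝ) (hα : 1 < α) (hβ : 0 ≤ β) (hθ : 0 < θ) (hC : 0 < C)
    (F K : ℝ → ℝ) (hFnn : ∀ t, 0 ≤ F t) (hKnn : ∀ t, 0 ≤ K t)
    (hF : IntegrableOn F (Set.Icc 0 T)) (hK : IntegrableOn K (Set.Icc 0 T))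
    (ρ : V → ℝ) (hρm : Measurable ρ) (hρnn : ∀ v, 0 ≤ ρ v)
    (hρb : ∀ R : ℝ, ∃ M : ℝ, ∀ v : V, ‖v‖ ≤ R → ρ v ≤ M)
    (i : V →L[ℝ] H) (hiInj : Function.Injective i) (hiDense : DenseRange i)
    (hiCpt : IsCompactOperator (⇑i))
    (A : ℝ → V → V →L[ℝ] ℝ)
    (hAm : ∀ v : V, Measurable fun q : ℝ × V => A q.1 q.2 v)
    (f : ℝ → V → 𝕏 → H)
    (hfm : Measurable fun q : ℝ × V × 𝕏 => f q.1 q.2.1 q.2.2)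
    (h1 : ∀ t ∈ Set.Icc (0 : ℝ) T, ∀ v₁ v₂ v : V,
      Continuous fun s : ℝ => A t (v₁ + s • v₂) v)
    (h2 : ∀ t ∈ Set.Icc (0 : ℝ) T, ∀ v₁ v₂ : V,
      2 * (A t v₁ (v₁ - v₂) - A t v₂ (v₁ - v₂))
          + ∫ z, ‖f t v₁ z - f t v₂ z‖ ^ (2 : ℕ) ∂ν
        ≤ (K t + ρ v₂) * ‖i v₁ - i v₂‖ ^ (2 : ℕ))
    (h3 : ∀ t ∈ Set.Icc (0 : ℝ) T, ∀ v : V,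
      2 * A t v v + θ * ‖v‖ ^ α ≤ F t * (1 + ‖i v‖ ^ (2 : ℕ)))
    (h4 : ∀ t ∈ Set.Icc (0 : ℝ) T, ∀ v : V,
      ‖A t v‖ ^ (α / (α - 1)) ≤ (F t + C * ‖v‖ ^ α) * (1 + ‖i v‖ ^ β))
    (Lf : ℝ × 𝕏 → ℝ) (hLfm : Measurable Lf) (hLfnn : ∀ q, 0 ≤ Lf q)
    (η₀ p Υ : ℝ) (hη₀ : 0 < η₀)
    (hΥ : Υ = max (max (2 * β * (α - 1) * (α + η₀) / α)
        (4 * (α - 1) * (α + η₀) / α)) (max 4 (β + 2)))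
    (hpΥ : Υ ≤ p)
    (hLfint : ∀ r ∈ ({2, 4, β + 2, Υ, Υ / 2} : Set ℝ),
      ∫⁻ q, ENNReal.ofReal (Lf q ^ r) ∂νT < ⊤)
    (hLfH : ∃ δ : ℝ, 0 < δ ∧ ∀ Γ : Set (ℝ × 𝕏), MeasurableSet Γ → νT Γ < ⊤ →
      ∫⁻ q in Γ, ENNReal.ofReal (Real.exp (δ * Lf q ^ p)) ∂νT < ⊤)
    (h5 : ∀ t ∈ Set.Icc (0 : ℝ) T, ∀ (v : V) (z : 𝕏),
      ‖f t v z‖ ≤ Lf (t, z) * (1 + ‖i v‖))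
    (Gf : ℝ × 𝕏 → ℝ) (hGfm : Measurable Gf) (hGfnn : ∀ q, 0 ≤ Gf q)
    (hGfint : ∫⁻ q, ENNReal.ofReal (Gf q ^ (2 : ℕ)) ∂νT < ⊤)
    (hGfH : ∃ δ : ℝ, 0 < δ ∧ ∀ Γ : Set (ℝ × 𝕏), MeasurableSet Γ → νT Γ < ⊤ →
      ∫⁻ q in Γ, ENNReal.ofReal (Real.exp (δ * Gf q ^ (2 : ℝ))) ∂νT < ⊤)
    (h6 : ∀ t ∈ Set.Icc (0 : ℝ) T, ∀ (v₁ v₂ : V) (z : 𝕏),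
      ‖f t v₁ z - f t v₂ z‖ ≤ Gf (t, z) * ‖i v₁ - i v₂‖)
    (hρgrow : ∀ v : V, ρ v ≤ C * (1 + ‖v‖ ^ α) * (1 + ‖i v‖ ^ β))
    (x : H) (g : ℝ × 𝕏 → ℝ) (hgm : Measurable g) (hgnn : ∀ q, 0 ≤ g q)
    (hgL : (∫⁻ q, ENNReal.ofReal (g q * Real.log (g q) - g q + 1) ∂νT) < ⊤)
    (X₁ : ℝ → H) (u₁ : ℝ → V) (X₂ : ℝ → H) (u₂ : ℝ → V)
    (hX₁ : IsSkeletonSolution T α ν i A f x g X₁ u₁)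
    (hX₂ : IsSkeletonSolution T α ν i A f x g X₂ u₂) :
    ∀ t ∈ Set.Icc (0 : ℝ) T, X₁ t = X₂ t := by
  have : SecondCountableTopology H := UniformSpace.secondCountable_of_separable H
  have : SecondCountableTopology V := UniformSpace.secondCountable_of_separable V
  have hα0 : 0 < α := by linarith
  have hα1 : 0 < α - 1 := by linarith
  set S : Set ℝ := Set.Icc 0 T with hS
  have hSm : MeasurableSet S := measurableSet_Icc
  set μ : Measure ℝ := volume.restrict S with hμ
  have hμfin : IsFiniteMeasure μ := by rw [hμ, hS]; infer_instance
  have hmemS : ∀ᵐ s ∂μ, s ∈ S := ae_restrict_mem hSm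
  obtain ⟨hX₁c, hu₁m, hX₁u, hu₁i, hX₁eq⟩ := hX₁
  obtain ⟨hX₂c, hu₂m, hX₂u, hu₂i, hX₂eq⟩ := hX₂
  have hΥ4 : 4 ≤ Υ := by rw [hΥ]; exact (le_max_left _ _).trans (le_max_right _ _)
  have hLg : Integrable (fun q => Lf q * |g q - 1|) (μ.prod ν) := by
    rw [hνT] at hLfint hLfH hgL
    refine integrable_mul_abs_sub_one (by linarith) hLfm hLfnn ?_ hLfH hgm hgnn hgL
    simpa [Real.rpow_two] using hLfint 2 (by simp)
  have hGg : Integrable (fun q => Gf q * |g q - 1|) (μ.prod ν) := by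
    rw [hνT] at hGfint hGfH hgL
    exact integrable_mul_abs_sub_one one_le_two hGfm hGfnn hGfint hGfH hgm hgnn hgL
  obtain ⟨M, hM0, hM₁, hM₂⟩ : ∃ M : ℝ, 0 ≤ M ∧ (∀ t ∈ S, ‖X₁ t‖ ≤ M) ∧ ∀ t ∈ S, ‖X₂ t‖ ≤ M := by
    obtain ⟨M₁, h₁⟩ := isCompact_Icc.exists_bound_of_continuousOn hX₁c
    obtain ⟨M₂, h₂⟩ := isCompact_Icc.exists_bound_of_continuousOn hX₂c
    refine ⟨max M₁ M₂, ?_, fun t ht => (h₁ t ht).trans (le_max_left _ _),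
      fun t ht => (h₂ t ht).trans (le_max_right _ _)⟩
    have h0 : (0 : ℝ) ∈ Set.Icc 0 T := ⟨le_rfl, hT.le⟩
    exact (norm_nonneg _).trans ((h₁ 0 h0).trans (le_max_left _ _))
  have hB₁ : ∀ᵐ s ∂μ, ‖i (u₁ s)‖ ≤ M := by
    filter_upwards [hX₁u, hmemS] with s hs hsS
    rw [hs]; exact hM₁ s hsS
  have hB₂ : ∀ᵐ s ∂μ, ‖i (u₂ s)‖ ≤ M := by
    filter_upwards [hX₂u, hmemS] with s hs hsS
    rw [hs]; exact hM₂ s hsS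
  have hpow : ∀ u : ℝ → V, StronglyMeasurable u →
      (∫⁻ t in S, ENNReal.ofReal (‖u t‖ ^ α)) < ⊤ → Integrable (fun s => ‖u s‖ ^ α) μ := by
    intro u hu hui
    refine ⟨(hu.norm.measurable.pow_const α).aestronglyMeasurable, ?_⟩
    rw [hasFiniteIntegral_iff_ofReal (ae_of_all _ fun s => by positivity)]
    exact hui
  have hU₁ := hpow u₁ hu₁m hu₁i
  have hU₂ := hpow u₂ hu₂m hu₂i
  have hLp : ∀ u : ℝ → V, StronglyMeasurable u → Integrable (fun s => ‖u s‖ ^ α) μ →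
      MemLp u (ENNReal.ofReal α) μ := by
    intro u hu hui
    rw [← integrable_norm_rpow_iff hu.aestronglyMeasurable (by simpa using hα0)
      ENNReal.ofReal_ne_top, ENNReal.toReal_ofReal hα0.le]
    exact hui
  have hFμ : Integrable F μ := hF
  obtain ⟨a₁, ha₁, ha₁0, hA₁⟩ := exists_memLp_bound hα hC.le hM0 hβ hFμ hFnn hU₁
    (fun s => by positivity) (N := fun s => ‖A s (u₁ s)‖) (fun s => norm_nonneg _)
    (fun s => norm_nonneg _) hB₁ (by
      filter_upwards [hmemS] with s hs using h4 s hs (u₁ s))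
  obtain ⟨a₂, ha₂, ha₂0, hA₂⟩ := exists_memLp_bound hα hC.le hM0 hβ hFμ hFnn hU₂
    (fun s => by positivity) (N := fun s => ‖A s (u₂ s)‖) (fun s => norm_nonneg _)
    (fun s => norm_nonneg _) hB₂ (by
      filter_upwards [hmemS] with s hs using h4 s hs (u₂ s))
  have hconj : (α / (α - 1)).HolderConjugate α := (Real.HolderConjugate.conjExponent hα).symm
  have hHolder : (ENNReal.ofReal (α / (α - 1))).HolderConjugate (ENNReal.ofReal α) :=
    hconj.ennrealOfReal
  have hq1 : 1 ≤ ENNReal.ofReal (α / (α - 1)) := by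
    rw [ENNReal.one_le_ofReal]; exact hconj.lt.le
  have hp1 : 1 ≤ ENNReal.ofReal α := by rw [ENNReal.one_le_ofReal]; exact hα.le
  -- the drift difference
  set k : ℝ → ℝ := fun s => ∫ z, Gf (s, z) * |g (s, z) - 1| ∂ν with hk
  have hk0 : ∀ s, 0 ≤ k s := fun s =>
    integral_nonneg fun z => mul_nonneg (hGfnn _) (abs_nonneg _)
  have hki : Integrable k μ := hGg.integral_prod_left
  have hfu : ∀ u : ℝ → V, StronglyMeasurable u →
      Measurable fun q : ℝ × 𝕏 => f q.1 (u q.1) q.2 := fun u hu =>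
    hfm.comp (measurable_fst.prodMk ((hu.measurable.comp measurable_fst).prodMk measurable_snd))
  have hD₁ := hfu u₁ hu₁m
  have hD₂ := hfu u₂ hu₂m
  have hf₁ : ∀ᵐ s ∂μ, ∀ z, ‖f s (u₁ s) z‖ ≤ Lf (s, z) * (1 + M) := by
    filter_upwards [hmemS, hB₁] with s hs hb z
    exact (h5 s hs _ z).trans (mul_le_mul_of_nonneg_left (by linarith) (hLfnn _))
  have hf₂ : ∀ᵐ s ∂μ, ∀ z, ‖f s (u₂ s) z‖ ≤ Lf (s, z) * (1 + M) := by
    filter_upwards [hmemS, hB₂] with s hs hb z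
    exact (h5 s hs _ z).trans (mul_le_mul_of_nonneg_left (by linarith) (hLfnn _))
  have hf₁₂ : ∀ᵐ s ∂μ, ∀ z, ‖f s (u₁ s) z - f s (u₂ s) z‖
      ≤ Gf (s, z) * ‖i (u₁ s) - i (u₂ s)‖ := by
    filter_upwards [hmemS] with s hs z using h6 s hs _ _ z
  have hP₁ := ae_integrable_inner_mul_sub_one hD₁ hgm hLg (c := fun _ => 1 + M) hf₁
  have hP₂ := ae_integrable_inner_mul_sub_one hD₂ hgm hLg (c := fun _ => 1 + M) hf₂
  have hP := ae_integrable_inner_mul_sub_one (hD₁.sub hD₂) hgm hGg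
    (c := fun s => ‖i (u₁ s) - i (u₂ s)‖) hf₁₂
  have hJ₁ := integrable_integral_inner_mul_sub_one hD₁ hgm hLg hf₁
  have hJ₂ := integrable_integral_inner_mul_sub_one hD₂ hgm hLg hf₂
  have hAmeas : ∀ u : ℝ → V, StronglyMeasurable u →
      Measurable fun q : ℝ × V => A q.1 (u q.1) q.2 := by
    intro u hu
    have hc : ∀ s : ℝ, Continuous fun v => A s (u s) v := fun s => (A s (u s)).continuous
    have hm : ∀ v : V, Measurable fun s => A s (u s) v := fun v =>
      (hAm v).comp (measurable_id.prodMk hu.measurable)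
    exact (measurable_uncurry_of_continuous_of_measurable
      (u := fun (v : V) (s : ℝ) => A s (u s) v) hc hm).comp measurable_swap
  have hAint : ∀ (u : ℝ → V) (a : ℝ → ℝ), StronglyMeasurable u →
      MemLp a (ENNReal.ofReal (α / (α - 1))) μ → (∀ᵐ s ∂μ, ‖A s (u s)‖ ≤ a s) → ∀ v,
      Integrable (fun s => A s (u s) v) μ := by
    intro u a hu ha hle v
    refine ((ha.integrable hq1).mul_const ‖v‖).mono' ?_ ?_
    · exact ((hAm v).comp (measurable_id.prodMk hu.measurable)).aestronglyMeasurable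
    · filter_upwards [hle] with s hs
      exact ((A s (u s)).le_opNorm v).trans (mul_le_mul_of_nonneg_right hs (norm_nonneg _))
  have hI₁ := hAint u₁ a₁ hu₁m ha₁ hA₁
  have hI₂ := hAint u₂ a₂ hu₂m ha₂ hA₂
  set L : ℝ → V → ℝ := fun s v => A s (u₁ s) v - A s (u₂ s) v
    + ∫ z, ⟪f s (u₁ s) z - f s (u₂ s) z, i v⟫ * (g (s, z) - 1) ∂ν with hL
  have hLm : Measurable fun q : ℝ × V => L q.1 q.2 := by
    refine ((hAmeas u₁ hu₁m).sub (hAmeas u₂ hu₂m)).add ?_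
    have hm : Measurable fun q : (ℝ × V) × 𝕏 =>
        ⟪f q.1.1 (u₁ q.1.1) q.2 - f q.1.1 (u₂ q.1.1) q.2, i q.1.2⟫ * (g (q.1.1, q.2) - 1) := by
      have e : Measurable fun q : (ℝ × V) × 𝕏 => (q.1.1, q.2) := by fun_prop
      refine (((hD₁.comp e).sub (hD₂.comp e)).inner ?_).mul ((hgm.comp e).sub_const 1)
      exact i.continuous.measurable.comp (measurable_snd.comp measurable_fst)
    exact hm.stronglyMeasurable.integral_prod_right'.measurable
  have hLlip : ∀ᵐ s ∂μ, ∀ v v', |L s v - L s v'| ≤ (a₁ s + a₂ s) * ‖v - v'‖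
      + k s * (2 * M) * ‖i v - i v'‖ := by
    filter_upwards [hA₁, hA₂, hP, hB₁, hB₂] with s hs₁ hs₂ hs hb₁ hb₂ v v'
    have e : L s v - L s v' = A s (u₁ s) (v - v') - A s (u₂ s) (v - v')
        + ∫ z, ⟪f s (u₁ s) z - f s (u₂ s) z, i v - i v'⟫ * (g (s, z) - 1) ∂ν := by
      have hsub := integral_sub (hs (i v)).1 (hs (i v')).1
      simp only [Pi.sub_apply] at hsub
      simp only [hL, map_sub, inner_sub_right, sub_mul] at hsub ⊢
      rw [hsub]
      ring
    have b₁ : |A s (u₁ s) (v - v')| ≤ a₁ s * ‖v - v'‖ :=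
      ((A s (u₁ s)).le_opNorm _).trans (mul_le_mul_of_nonneg_right hs₁ (norm_nonneg _))
    have b₂ : |A s (u₂ s) (v - v')| ≤ a₂ s * ‖v - v'‖ :=
      ((A s (u₂ s)).le_opNorm _).trans (mul_le_mul_of_nonneg_right hs₂ (norm_nonneg _))
    have b₃ := (hs (i v - i v')).2
    have b₄ : k s * ‖i (u₁ s) - i (u₂ s)‖ * ‖i v - i v'‖ ≤ k s * (2 * M) * ‖i v - i v'‖ := by
      have := norm_sub_le (i (u₁ s)) (i (u₂ s))
      have := hk0 s
      gcongr
      linarith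
    rw [e]
    refine (abs_add_le _ _).trans (add_le_add ?_ (b₃.trans b₄))
    refine (abs_sub _ _).trans ?_
    linarith
  have hL0 : ∀ s, L s 0 = 0 := fun s => by simp [hL]
  have hLbd : ∀ᵐ s ∂μ, ∀ v, ‖L s v‖ ≤ (a₁ s + a₂ s) * ‖v‖ + k s * (2 * M) * ‖i v‖ := by
    filter_upwards [hLlip] with s hs v
    simpa [hL0] using hs v 0
  have ha := ha₁.add ha₂
  have hm2 : Integrable (fun s => k s * (2 * M)) μ := hki.mul_const _
  have hLv : ∀ v, Integrable (fun s => L s v) μ := by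
    intro v
    refine (((ha.integrable hq1).mul_const ‖v‖).add (hm2.mul_const ‖i v‖)).mono' ?_ ?_
    · exact (hLm.comp (measurable_id.prodMk measurable_const)).aestronglyMeasurable
    · filter_upwards [hLbd] with s hs using hs v
  have hwm : StronglyMeasurable fun s => u₁ s - u₂ s := hu₁m.sub hu₂m
  have hwLp : MemLp (fun s => u₁ s - u₂ s) (ENNReal.ofReal α) μ :=
    (hLp u₁ hu₁m hU₁).sub (hLp u₂ hu₂m hU₂)
  have hLw : Integrable (fun s => L s (u₁ s - u₂ s)) μ := by
    refine ((ha.integrable_mul hwLp.norm).add (hm2.mul_const (2 * M))).mono' ?_ ?_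
    · exact (hLm.comp (measurable_id.prodMk hwm.measurable)).aestronglyMeasurable
    · filter_upwards [hLbd, hB₁, hB₂] with s hs hb₁ hb₂
      refine (hs _).trans (add_le_add le_rfl ?_)
      refine mul_le_mul_of_nonneg_left ?_ (mul_nonneg (hk0 s) (by linarith))
      have := norm_sub_le (i (u₁ s)) (i (u₂ s))
      rw [map_sub]
      linarith
  have hDeq : ∀ t ∈ S, ∀ v, ⟪X₁ t - X₂ t, i v⟫ = ∫ s in (0 : ℝ)..t, S.indicator (L · v) s := by
    intro t ht v
    have hsub : Set.Icc 0 t ⊆ S := Set.Icc_subset_Icc le_rfl ht.2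
    rw [intervalIntegral.integral_of_le ht.1, ← integral_Icc_eq_integral_Ioc,
      setIntegral_congr_fun measurableSet_Icc (g := (L · v)) fun s hs =>
        Set.indicator_of_mem (hsub hs) _]
    have hle : volume.restrict (Set.Icc 0 t) ≤ μ := Measure.restrict_mono hsub le_rfl
    have hac := Measure.absolutelyContinuous_of_le hle
    have eL : ∫ s in Set.Icc 0 t, L s v = ∫ s in Set.Icc 0 t, ((A s (u₁ s) v - A s (u₂ s) v)
        + ((∫ z, ⟪f s (u₁ s) z, i v⟫ * (g (s, z) - 1) ∂ν)
          - ∫ z, ⟪f s (u₂ s) z, i v⟫ * (g (s, z) - 1) ∂ν)) := by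
      refine integral_congr_ae ?_
      filter_upwards [hac.ae_le hP₁, hac.ae_le hP₂] with s hs₁ hs₂
      simp only [hL]
      rw [← integral_sub (hs₁ (i v)).1 (hs₂ (i v)).1]
      simp only [inner_sub_left, sub_mul]
    have j₁ := (hI₁ v).mono_measure hle
    have j₂ := (hI₂ v).mono_measure hle
    have j₃ := (hJ₁ (i v)).mono_measure hle
    have j₄ := (hJ₂ (i v)).mono_measure hle
    rw [inner_sub_left, hX₁eq t ht v, hX₂eq t ht v, eL]
    refine Eq.trans ?_ (integral_add (j₁.sub j₂) (j₃.sub j₄)).symm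
    refine Eq.trans ?_ (congrArg₂ (· + ·) (integral_sub j₁ j₂) (integral_sub j₃ j₄)).symm
    ring
  have h0S : (0 : ℝ) ∈ S := ⟨le_rfl, hT.le⟩
  have hinit : X₁ 0 - X₂ 0 = 0 :=
    hiDense.eq_zero_of_inner_left ℝ fun v => by
      simpa using hDeq 0 h0S v
  -- extension to the whole line
  set Y : ℝ → H := fun t => X₁ (Set.projIcc 0 T hT.le t) - X₂ (Set.projIcc 0 T hT.le t) with hY
  have hYS : ∀ t ∈ S, Y t = X₁ t - X₂ t := fun t ht => by
    simp only [hY, Set.projIcc_of_mem hT.le ht]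
  have hYuc : UniformContinuous Y := by
    have hc : Continuous fun t : Set.Icc 0 T => X₁ t - X₂ t :=
      (continuousOn_iff_continuous_domRestrict.1 hX₁c).sub
        (continuousOn_iff_continuous_domRestrict.1 hX₂c)
    exact (CompactSpace.uniformContinuous_of_continuous hc).comp
      (LipschitzWith.projIcc hT.le).uniformContinuous
  have hYneg : ∀ s ≤ 0, Y s = 0 := fun s hs => by
    simp only [hY, Set.projIcc_of_le_left hT.le hs]
    exact hinit
  set w : ℝ → V := S.indicator fun s => u₁ s - u₂ s with hw
  set Λ : ℝ → V → ℝ := fun s v => S.indicator (L · v) s with hΛ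
  have hΛw : (fun s => Λ s (w s)) = S.indicator fun s => L s (u₁ s - u₂ s) := by
    ext s
    by_cases hs : s ∈ S <;> simp [hΛ, hw, hs]
  have hYw : ∀ᵐ s, s ≤ T → i (w s) = Y s := by
    have e₁ := (ae_restrict_iff' hSm).1 hX₁u
    have e₂ := (ae_restrict_iff' hSm).1 hX₂u
    filter_upwards [e₁, e₂] with s hs₁ hs₂ hsT
    by_cases hs : s ∈ S
    · rw [hYS s hs, hw, Set.indicator_of_mem hs, map_sub, hs₁ hs, hs₂ hs]
    · have : s < 0 := by
        by_contra! h
        exact hs ⟨h, hsT⟩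
      rw [hYneg s this.le, hw, Set.indicator_of_notMem hs, map_zero]
  have hΛv : ∀ v, Integrable fun s => Λ s v := fun v => (integrable_indicator_iff hSm).2 (hLv v)
  have hweak0 : ∀ t ≤ T, ∀ v, ⟪Y t, i v⟫ = ∫ r in (0 : ℝ)..t, Λ r v := by
    intro t htT v
    rcases le_or_gt 0 t with ht | ht
    · rw [hYS t ⟨ht, htT⟩]
      exact hDeq t ⟨ht, htT⟩ v
    · rw [hYneg t ht.le, inner_zero_left, intervalIntegral.integral_of_ge ht.le,
        integral_Ioc_eq_integral_Ioo, setIntegral_congr_fun (g := fun _ => (0 : ℝ)) measurableSet_Ioo]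
      · simp
      · intro s hs
        exact Set.indicator_of_notMem (fun h => absurd h.1 (not_le.2 hs.2)) _
  have henergy : ∀ t ∈ S, ‖Y t‖ ^ 2 ≤ 2 * ∫ s in (0 : ℝ)..t, Λ s (w s) := by
    intro t ht
    rcases ht.1.eq_or_lt with rfl | ht0
    · simp [hYneg 0 le_rfl]
    refine norm_sq_le_two_mul_integral i hp1 ENNReal.ofReal_ne_top
      ((memLp_indicator_iff_restrict hSm).2 hwLp) (a := S.indicator (a₁ + a₂))
      (m := S.indicator fun s => k s * (2 * M)) ((memLp_indicator_iff_restrict hSm).2 ha)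
      (Set.indicator_nonneg fun s _ => add_nonneg (ha₁0 s) (ha₂0 s))
      ((integrable_indicator_iff hSm).2 hm2)
      (Set.indicator_nonneg fun s _ => mul_nonneg (hk0 s) (by linarith)) hYuc hYneg hYw hΛv
      ?_ ?_ ?_ ?_ ht0 ht.2
    · rw [hΛw]
      exact (integrable_indicator_iff hSm).2 hLw
    · intro s hs v
      exact Set.indicator_of_notMem (fun h => absurd h.1 (not_le.2 hs)) _
    · filter_upwards [(ae_restrict_iff' hSm).1 hLlip] with s hs v v'
      by_cases hsS : s ∈ S
      · simpa [hΛ, hsS] using hs hsS v v'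
      · simp [hΛ, hsS]
    · intro r t hrt htT v
      rw [inner_sub_left, hweak0 t htT, hweak0 r (hrt.trans htT),
        intervalIntegral.integral_interval_sub_left (hΛv v).intervalIntegrable
          (hΛv v).intervalIntegrable]
  -- Gronwall
  have hρi : Integrable (fun s => ρ (u₂ s)) μ := by
    refine (((integrable_const 1).add hU₂).const_mul C |>.mul_const (1 + M ^ β)).mono'
      (hρm.comp hu₂m.measurable).aestronglyMeasurable ?_
    filter_upwards [hB₂] with s hs
    rw [Real.norm_of_nonneg (hρnn _)]
    refine (hρgrow _).trans (mul_le_mul_of_nonneg_left ?_ (by positivity))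
    gcongr
  have hzero := eq_zero_of_le_integral_mul hT.le (y := fun t => ‖Y t‖ ^ 2)
    (κ := fun s => K s + ρ (u₂ s) + 2 * k s)
    (by have := hYuc.continuous; fun_prop) (fun t _ => by positivity)
    (fun s => add_nonneg (add_nonneg (hKnn s) (hρnn _)) (by linarith [hk0 s]))
    ((Integrable.add hK hρi).add (hki.const_mul 2)) ?_
  · intro t ht
    have h := hzero t ht
    rw [sq_eq_zero_iff, norm_eq_zero, hYS t ht, sub_eq_zero] at h
    exact h
  intro t ht
  refine (henergy t ht).trans ?_
  rw [← intervalIntegral.integral_const_mul]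
  have hsub : Set.Icc 0 t ⊆ S := Set.Icc_subset_Icc le_rfl ht.2
  have hκi : Integrable (fun s => (K s + ρ (u₂ s) + 2 * k s) * ‖Y s‖ ^ 2) μ := by
    have hYc := hYuc.continuous
    exact IntegrableOn.mul_continuousOn ((Integrable.add hK hρi).add (hki.const_mul 2))
      (by fun_prop) isCompact_Icc
  refine intervalIntegral.integral_mono_ae_restrict ht.1 ?_ ?_ ?_
  · refine Integrable.intervalIntegrable (Integrable.const_mul ?_ 2)
    rw [hΛw]
    exact (integrable_indicator_iff hSm).2 hLw
  · rw [intervalIntegrable_iff_integrableOn_Icc_of_le ht.1]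
    exact IntegrableOn.mono_set hκi hsub
  refine ae_mono (Measure.restrict_mono hsub le_rfl) ?_
  filter_upwards [hmemS, hX₁u, hX₂u, hP] with s hs hs₁ hs₂ hsP
  have e : Λ s (w s) = L s (u₁ s - u₂ s) := by simp [hΛ, hw, hs]
  have b := h2 s hs (u₁ s) (u₂ s)
  have b0 : 0 ≤ ∫ z, ‖f s (u₁ s) z - f s (u₂ s) z‖ ^ (2 : ℕ) ∂ν :=
    integral_nonneg fun z => by positivity
  have c := (abs_le.1 (hsP (i (u₁ s - u₂ s))).2).2
  rw [map_sub] at c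
  rw [e, hYS s hs, ← hs₁, ← hs₂]
  simp only [hL, map_sub, Pi.sub_apply] at b c ⊢
  change _ ≤ k s * _ * _ at c
  linear_combination b + b0 + 2 * c
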